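/- On the lexicographic domain ℒ, a rule satisfies balancedness (BAL), individual-good efficiency (IGE), the worst-endowment lower bound (WELB), and drop strategy-proofness (DSP) if and only if it equals the generalized Top Trading Cycles rule TTC. -/

import Mathlib

attribute [local instance] Classical.propDecidable

namespace Realloc

/-- A strict preference over bundles: a strict total order on `Finset O`. -/
structure Pref (O : Type) : Type where
  strict : Finset O → Finset O → Prop
  total : ∀ X Y : Finset O, strict X Y ∨ X = Y ∨ strict Y X
  irrefl : ∀ X : Finset O, ¬ strict X X
  trans : ∀ X Y Z : Finset O, strict X Y → strict Y Z → strict X Z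

/-- The weak ("at least as good as") relation associated with a strict preference. -/
def Pref.weak {O : Type} (p : Pref O) (X Y : Finset O) : Prop :=
  p.strict X Y ∨ X = Y

/-- An allocation: nonempty pairwise disjoint bundles whose union is all of `O`. -/
structure Allocation (N O : Type) : Type where
  bundle : N → Finset O
  nonempty : ∀ i : N, (bundle i).Nonempty
  disj : ∀ i j : N, i ≠ j → ∀ o : O, o ∈ bundle i → o ∉ bundle j
  cover : ∀ o : O, ∃ i : N, o ∈ bundle i

variable {N O : Type}

/-- Two preferences induce the same marginal (singleton) ranking over objects. -/
def MargEq (p q : Pref O) : Prop :=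
  ∀ x y : O, p.strict {x} {y} ↔ q.strict {x} {y}

/-- Responsive preferences. -/
def Responsive [DecidableEq O] (p : Pref O) : Prop :=
  ∀ (X : Finset O) (y z : O), y ∉ X → z ∉ X →
    (p.strict (insert y X) (insert z X) ↔ p.strict {y} {z})

/-- Lexicographic preferences: `X` is preferred to `Y` iff the best object of the
symmetric difference belongs to `X`. -/
def Lexicographic [DecidableEq O] (p : Pref O) : Prop :=
  ∀ X Y : Finset O, X ≠ Y →
    (p.strict X Y ↔
      ∃ x ∈ X \ Y, ∀ y ∈ (X \ Y) ∪ (Y \ X), y ≠ x → p.strict {x} {y})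

/-- Conditionally lexicographic preferences. -/
def CondLex [DecidableEq O] (p : Pref O) : Prop :=
  ∀ X Y : Finset O, Disjoint X Y → X.Nonempty →
    ∃! x : O, x ∈ X ∧ ∀ Z : Finset O, Z ⊆ X.erase x → p.strict (insert x Y) (Y ∪ Z)

/-- Monotonic preferences. -/
def Monot (p : Pref O) : Prop :=
  ∀ X Y : Finset O, Y ⊆ X → p.weak X Y

/-- `p'` is a subset-drop strategy for `p` (relative to endowment `ωi`):
some set `X ⊆ O ∖ ωi` is moved to the bottom of the marginal ranking, preserving
the relative marginal order within `X` and within its complement. -/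
def SubsetDropStrategy (ωi : Finset O) (p p' : Pref O) : Prop :=
  ∃ X : Set O, (∀ x ∈ X, x ∉ ωi) ∧
    (∀ x ∈ X, ∀ y ∈ X, (p.strict {x} {y} ↔ p'.strict {x} {y})) ∧
    (∀ x ∉ X, ∀ y ∉ X, (p.strict {x} {y} ↔ p'.strict {x} {y})) ∧
    (∀ x ∈ X, ∀ y ∉ X, p'.strict {y} {x})

/-- `p'` is a drop strategy for `p`: a single object `x ∉ ωi` is moved to the bottom. -/
def DropStrategy (ωi : Finset O) (p p' : Pref O) : Prop :=
  ∃ x : O, x ∉ ωi ∧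
    (∀ u v : O, u ≠ x → v ≠ x → (p.strict {u} {v} ↔ p'.strict {u} {v})) ∧
    (∀ y : O, y ≠ x → p'.strict {y} {x})

/-- `p'` is a truncation strategy for `p`: the tail set
`{o ∈ O ∖ ωi : {x} R {o}}` (for some object `x`) is moved to the bottom. -/
def TruncationStrategy (ωi : Finset O) (p p' : Pref O) : Prop :=
  ∃ x : O,
    (∀ u v : O, (u ∉ ωi ∧ p.weak {x} {u}) → (v ∉ ωi ∧ p.weak {x} {v}) →
      (p.strict {u} {v} ↔ p'.strict {u} {v})) ∧
    (∀ u v : O, ¬(u ∉ ωi ∧ p.weak {x} {u}) → ¬(v ∉ ωi ∧ p.weak {x} {v}) →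
      (p.strict {u} {v} ↔ p'.strict {u} {v})) ∧
    (∀ u v : O, (u ∉ ωi ∧ p.weak {x} {u}) → ¬(v ∉ ωi ∧ p.weak {x} {v}) →
      p'.strict {v} {u})

/-- There is a Pareto-improving trading cycle at the assignment `μ`:
a cyclic sequence of `k+1 ≥ 1` distinct objects and distinct agents, each object owned
(at `μ`) by its agent, such that every agent on the cycle strictly gains by swapping
the object she relinquishes for the object she points to. -/
def ParetoImprovingCycleAt [DecidableEq O] (pref : N → Pref O) (μ : N → Finset O) : Prop :=
  ∃ (k : ℕ) (obj : Fin (k + 1) → O) (ag : Fin (k + 1) → N),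
    Function.Injective obj ∧ Function.Injective ag ∧
    (∀ ℓ : Fin (k + 1), obj ℓ ∈ μ (ag ℓ)) ∧
    (∀ ℓ : Fin (k + 1),
      (pref (ag ℓ)).strict ((insert (obj (ℓ + 1)) (μ (ag ℓ))).erase (obj ℓ)) (μ (ag ℓ)))

/-- Individual-good efficiency of an assignment at a profile. -/
def IGEat [DecidableEq O] (pref : N → Pref O) (μ : N → Finset O) : Prop :=
  ¬ ParetoImprovingCycleAt pref μ

/-- `ν` Pareto dominates `μ` at the profile `pref`. -/
def ParetoDominates (pref : N → Pref O) (ν μ : N → Finset O) : Prop :=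
  (∀ i, (pref i).weak (ν i) (μ i)) ∧ ∃ j, (pref j).strict (ν j) (μ j)

/-- Pareto efficiency of an assignment at a profile. -/
def ParetoEffAt (pref : N → Pref O) (μ : N → Finset O) : Prop :=
  ∀ ν : Allocation N O, ¬ ParetoDominates pref ν.bundle μ

/-- The marginally most-preferred object of a (nonempty) finite set of objects. -/
noncomputable def Pref.best [Nonempty O] (p : Pref O) (S : Finset O) : O :=
  if h : ∃ x : O, x ∈ S ∧ ∀ y ∈ S, p.weak {x} {y} then h.choose
  else Classical.arbitrary O

/-- The conditionally most-preferred object of `S` given the already-held bundle `Y`. -/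
noncomputable def Pref.cbest [Nonempty O] [DecidableEq O] (p : Pref O) (S Y : Finset O) : O :=
  if h : ∃ x : O, x ∈ S ∧ ∀ Z : Finset O, Z ⊆ S.erase x → p.strict (insert x Y) (Y ∪ Z)
  then h.choose else Classical.arbitrary O

/-- The initial owner of an object. -/
noncomputable def Allocation.owner (ω : Allocation N O) (o : O) : N :=
  (ω.cover o).choose

/-- One pass of the generalized TTC algorithm, with fuel.  At each step every agent points
to her marginally best remaining object and every remaining object points to its owner;
the objects lying on cycles of this functional graph (the periodic points of `g`) are
traded: the owner of a cycling object receives the object she points to. -/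
noncomputable def TTCaux [Nonempty O] [DecidableEq O] (pref : N → Pref O) (own : O → N) :
    ℕ → Finset O → N → Finset O
  | 0, _, _ => ∅
  | fuel + 1, S, i =>
      let g : O → O := fun o => (pref (own o)).best S
      let C : Finset O := S.filter fun o => ∃ k : ℕ, 0 < k ∧ g^[k] o = o
      if S.Nonempty then
        ((C.filter fun o => own o = i).image g) ∪ TTCaux pref own fuel (S \ C) i
      else ∅

/-- The generalized Top Trading Cycles rule: the bundle received by agent `i`. -/
noncomputable def TTC [Fintype O] [Nonempty O] [DecidableEq O]
    (pref : N → Pref O) (ω : Allocation N O) (i : N) : Finset O :=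
  TTCaux pref ω.owner (Fintype.card O + 1) Finset.univ i

/-- One pass of the Augmented TTC algorithm, with fuel: agents point to their
conditionally most-preferred remaining object given the bundle assigned so far. -/
noncomputable def ATTCaux [Nonempty O] [DecidableEq O] (pref : N → Pref O) (own : O → N) :
    ℕ → Finset O → (N → Finset O) → N → Finset O
  | 0, _, μ => μ
  | fuel + 1, S, μ =>
      let g : O → O := fun o => (pref (own o)).cbest S (μ (own o))
      let C : Finset O := S.filter fun o => ∃ k : ℕ, 0 < k ∧ g^[k] o = o
      if S.Nonempty then
        ATTCaux pref own fuel (S \ C) (fun j => μ j ∪ ((C.filter fun o => own o = j).image g))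
      else μ

/-- The Augmented Top Trading Cycles rule: the bundle received by agent `i`. -/
noncomputable def ATTC [Fintype O] [Nonempty O] [DecidableEq O]
    (pref : N → Pref O) (ω : Allocation N O) (i : N) : Finset O :=
  ATTCaux pref ω.owner (Fintype.card O + 1) Finset.univ (fun _ => ∅) i

/-- Conditional marginal preference of `p` given the bundle `Y`:
`x` is conditionally better than `y`. -/
def CMarg [DecidableEq O] (p : Pref O) (Y : Finset O) (x y : O) : Prop :=
  p.strict ((insert x Y).erase y) ((insert y Y).erase x)

/-- Weak conditional marginal preference. -/
def CMargWeak [DecidableEq O] (p : Pref O) (Y : Finset O) (x y : O) : Prop :=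
  CMarg p Y x y ∨ x = y

/-- Drop strategy on the conditionally lexicographic domain: `x ∉ ωi` becomes the worst,
with preferences over bundles avoiding `x` unchanged. -/
def DropStrategyCL (ωi : Finset O) (p p' : Pref O) : Prop :=
  ∃ x : O, x ∉ ωi ∧
    (∀ Y : Finset O, Y.Nonempty → x ∉ Y → p'.strict Y {x}) ∧
    (∀ Y Z : Finset O, x ∉ Y → x ∉ Z → (p'.strict Y Z ↔ p.strict Y Z))

section Rules

variable [DecidableEq O]

/-- Balancedness of a rule on the domain `D`. -/
def RBAL (D : Pref O → Prop) (ω : Allocation N O)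
    (φ : (N → Pref O) → Allocation N O) : Prop :=
  ∀ P : N → Pref O, (∀ i, D (P i)) → ∀ i, ((φ P).bundle i).card = (ω.bundle i).card

/-- Individual-good efficiency of a rule on the domain `D`. -/
def RIGE (D : Pref O → Prop) (φ : (N → Pref O) → Allocation N O) : Prop :=
  ∀ P : N → Pref O, (∀ i, D (P i)) → IGEat P ((φ P).bundle)

/-- Pareto efficiency of a rule on the domain `D`. -/
def RPE (D : Pref O → Prop) (φ : (N → Pref O) → Allocation N O) : Prop :=
  ∀ P : N → Pref O, (∀ i, D (P i)) → ParetoEffAt P ((φ P).bundle)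

/-- Individual rationality of a rule on the domain `D`. -/
def RIR (D : Pref O → Prop) (ω : Allocation N O)
    (φ : (N → Pref O) → Allocation N O) : Prop :=
  ∀ P : N → Pref O, (∀ i, D (P i)) → ∀ i, (P i).weak ((φ P).bundle i) (ω.bundle i)

/-- The worst-endowment lower bound of a rule on the domain `D`: no agent receives an
object marginally worse than the marginally worst object of her endowment. -/
def RWELB (D : Pref O → Prop) (ω : Allocation N O)
    (φ : (N → Pref O) → Allocation N O) : Prop :=
  ∀ P : N → Pref O, (∀ i, D (P i)) → ∀ i, ∀ o ∈ (φ P).bundle i,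
    ∀ w ∈ ω.bundle i, (∀ y ∈ ω.bundle i, (P i).weak {y} {w}) → (P i).weak {o} {w}

/-- Marginality of a rule on the domain `D`. -/
def RMAR (D : Pref O → Prop) (φ : (N → Pref O) → Allocation N O) : Prop :=
  ∀ P P' : N → Pref O, (∀ i, D (P i)) → (∀ i, D (P' i)) →
    (∀ i, MargEq (P i) (P' i)) → ∀ i, (φ P).bundle i = (φ P').bundle i

variable [DecidableEq N]

/-- Truncation-proofness of a rule on the domain `D`. -/
def RTP (D : Pref O → Prop) (ω : Allocation N O)
    (φ : (N → Pref O) → Allocation N O) : Prop :=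
  ∀ P : N → Pref O, (∀ i, D (P i)) → ∀ i : N, ∀ p' : Pref O, D p' →
    TruncationStrategy (ω.bundle i) (P i) p' →
    (P i).weak ((φ P).bundle i) ((φ (Function.update P i p')).bundle i)

/-- Drop strategy-proofness of a rule on the domain `D`. -/
def RDSP (D : Pref O → Prop) (ω : Allocation N O)
    (φ : (N → Pref O) → Allocation N O) : Prop :=
  ∀ P : N → Pref O, (∀ i, D (P i)) → ∀ i : N, ∀ p' : Pref O, D p' →
    DropStrategy (ω.bundle i) (P i) p' →
    (P i).weak ((φ P).bundle i) ((φ (Function.update P i p')).bundle i)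

/-- Subset-drop strategy-proofness of a rule on the domain `D`. -/
def RSDSP (D : Pref O → Prop) (ω : Allocation N O)
    (φ : (N → Pref O) → Allocation N O) : Prop :=
  ∀ P : N → Pref O, (∀ i, D (P i)) → ∀ i : N, ∀ p' : Pref O, D p' →
    SubsetDropStrategy (ω.bundle i) (P i) p' →
    (P i).weak ((φ P).bundle i) ((φ (Function.update P i p')).bundle i)

/-- Worst-endowment lower bound on the conditionally lexicographic domain, formulated
with conditional marginal preferences. -/
def RWELBCL (D : Pref O → Prop) (ω : Allocation N O)
    (φ : (N → Pref O) → Allocation N O) : Prop :=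
  ∀ P : N → Pref O, (∀ i, D (P i)) → ∀ i, ∀ o ∈ (φ P).bundle i,
    ∀ w ∈ ω.bundle i,
      (∀ y ∈ ω.bundle i, CMargWeak (P i) ((φ P).bundle i) y w) →
      CMargWeak (P i) ((φ P).bundle i) o w

/-- Drop strategy-proofness on the conditionally lexicographic domain. -/
def RDSPCL (D : Pref O → Prop) (ω : Allocation N O)
    (φ : (N → Pref O) → Allocation N O) : Prop :=
  ∀ P : N → Pref O, (∀ i, D (P i)) → ∀ i : N, ∀ p' : Pref O, D p' →
    DropStrategyCL (ω.bundle i) (P i) p' →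
    (P i).weak ((φ P).bundle i) ((φ (Function.update P i p')).bundle i)

end Rules

/-- Agent `i`'s opportunity set under TTC when reporting `p`: the set of bundles
she may receive as others' (responsive) reports vary. -/
def Opp [Fintype O] [Nonempty O] [DecidableEq O] (ω : Allocation N O) (i : N)
    (p : Pref O) : Set (Finset O) :=
  {A | ∃ Q : N → Pref O, (∀ j, Responsive (Q j)) ∧ Q i = p ∧ TTC Q ω i = A}

/-!
The outcome of Top Trading Cycles is encoded by a permutation `σ` of the objects (the owner of `o`
receives `σ o` in exchange for `o`) and a round number `τ`, constant along the cycles of `σ`, such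
that `σ o` is the best object for the owner of `o` among those leaving in round `τ o` or later.
These data determine the allocation, and the trades before the round in which an agent receives an
object survive when she drops it. So dropping can only cost her that object in exchange for worse
ones, which makes TTC drop strategy-proof.

Conversely, let a rule satisfy the four axioms. It executes the trades of `σ` by induction on the
round and, within a round, on the number of acceptable objects, those outside an agent's endowment
that she prefers to her worst endowed object. Suppose the owner `i` of `o` does not receive `σ o`.
If she could acceptably receive anything beyond her trades up to this round, dropping it would give
her `σ o` by induction, contradicting drop strategy-proofness. So by the worst-endowment lower bound
all she receives is her earlier trades and endowed objects, and balancedness forces her to keep `o`.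
Hence so does every agent on the cycle of `o`, and this cycle is Pareto improving.
-/

section Cycles

variable {α : Type*} {f : α → α}

theorem exists_mem_periodicPts_of_mapsTo {s : Set α} (hs : s.Finite) (hne : s.Nonempty)
    (hf : Set.MapsTo f s s) : ∃ x ∈ s, x ∈ Function.periodicPts f := by
  obtain ⟨x, hx⟩ := hne
  have hmem (n : ℕ) : f^[n] x ∈ s := hf.iterate n hx
  obtain ⟨m, n, hmn, heq⟩ : ∃ m n, m < n ∧ f^[m] x = f^[n] x := by
    obtain ⟨m, -, n, -, hmn, heq⟩ :=
      Set.infinite_univ.exists_ne_map_eq_of_mapsTo (fun n _ => hmem n) hs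
    exact hmn.lt_or_gt.elim (fun h => ⟨m, n, h, heq⟩) fun h => ⟨n, m, h, heq.symm⟩
  refine ⟨f^[m] x, hmem m, Function.mk_mem_periodicPts (Nat.sub_pos_of_lt hmn) ?_⟩
  rw [Function.IsPeriodicPt, Function.IsFixedPt, ← Function.iterate_add_apply,
    Nat.sub_add_cancel hmn.le, heq]

theorem bijOn_inter_periodicPts {s : Set α} (hf : Set.MapsTo f s s) :
    Set.BijOn f (s ∩ Function.periodicPts f) (s ∩ Function.periodicPts f) := by
  have hbij := Function.bijOn_periodicPts f
  refine ⟨hf.inter_inter hbij.mapsTo, hbij.injOn.mono Set.inter_subset_right, ?_⟩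
  rintro y ⟨hys, n, hn, hy⟩
  refine ⟨f^[n - 1] y, ⟨hf.iterate _ hys, n, hn, hy.apply_iterate _⟩, ?_⟩
  rw [← Function.iterate_succ_apply' f, Nat.succ_eq_add_one, Nat.sub_add_cancel hn, hy.eq]

theorem exists_injective_cycle_of_mem_periodicPts {x : α} (hx : x ∈ Function.periodicPts f) :
    ∃ (k : ℕ) (c : Fin (k + 1) → α), Function.Injective c ∧ (∀ ℓ, c ℓ = f^[ℓ] x) ∧
      ∀ ℓ, c (ℓ + 1) = f (c ℓ) := by
  obtain ⟨k, hk⟩ := Nat.exists_eq_add_one.2 (Function.minimalPeriod_pos_of_mem_periodicPts hx)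
  refine ⟨k, fun ℓ => f^[ℓ] x, fun a b hab => Fin.ext ?_, fun _ => rfl, fun ℓ => ?_⟩
  · exact Function.iterate_injOn_Iio_minimalPeriod (a.isLt.trans_eq hk.symm)
      (b.isLt.trans_eq hk.symm) hab
  · change f^[(ℓ + 1 : Fin (k + 1))] x = f (f^[ℓ] x)
    rw [← Function.iterate_succ_apply' f, Fin.val_add_one]
    split_ifs with hlast
    · rw [hlast, Fin.val_last, Nat.succ_eq_add_one, ← hk, Function.iterate_minimalPeriod,
        Function.iterate_zero, id]
    · rfl

theorem exists_injective_cycle_of_mapsTo {s : Set α} (hs : s.Finite) (hne : s.Nonempty)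
    (hf : Set.MapsTo f s s) :
    ∃ (k : ℕ) (c : Fin (k + 1) → α), Function.Injective c ∧ (∀ ℓ, c ℓ ∈ s) ∧
      ∀ ℓ, c (ℓ + 1) = f (c ℓ) := by
  obtain ⟨x, hxs, hx⟩ := exists_mem_periodicPts_of_mapsTo hs hne hf
  obtain ⟨k, c, hinj, hc, hnext⟩ := exists_injective_cycle_of_mem_periodicPts hx
  exact ⟨k, c, hinj, fun ℓ => hc ℓ ▸ hf.iterate ℓ hxs, hnext⟩

theorem exists_perm_of_bijOn {s : Set α} (hf : Set.BijOn f s s) :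
    ∃ ρ : Equiv.Perm α, (∀ x ∈ s, ρ x = f x) ∧ ∀ x ∉ s, ρ x = x :=
  ⟨Equiv.Perm.ofSubtype hf.equiv, fun _ hx => Equiv.Perm.ofSubtype_apply_of_mem _ hx,
    fun _ hx => Equiv.Perm.ofSubtype_apply_of_not_mem _ hx⟩

end Cycles

section Preferences

namespace Pref

variable {p : Pref O}

theorem strict_asymm {X Y : Finset O} (h : p.strict X Y) : ¬ p.strict Y X :=
  fun h' => p.irrefl _ (p.trans _ _ _ h h')

theorem not_weak_of_strict {X Y : Finset O} (h : p.strict X Y) : ¬ p.weak Y X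
  | .inl h' => strict_asymm h h'
  | .inr h' => p.irrefl Y (by rwa [← h'] at h)

theorem not_weak_iff {X Y : Finset O} : ¬ p.weak X Y ↔ p.strict Y X := by
  refine ⟨fun h => ?_, not_weak_of_strict⟩
  rcases p.total X Y with hXY | rfl | hYX
  · exact absurd (.inl hXY) h
  · exact absurd (.inr rfl) h
  · exact hYX

theorem weak_trans {X Y Z : Finset O} (hXY : p.weak X Y) (hYZ : p.weak Y Z) : p.weak X Z := by
  rcases hXY with hXY | rfl
  · rcases hYZ with hYZ | rfl
    · exact .inl (p.trans _ _ _ hXY hYZ)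
    · exact .inl hXY
  · exact hYZ

theorem weak_antisymm {X Y : Finset O} (hXY : p.weak X Y) (hYX : p.weak Y X) : X = Y :=
  hXY.elim (fun h => absurd hYX (not_weak_of_strict h)) id

theorem strict_of_weak_of_ne {x y : O} (h : p.weak {x} {y}) (hne : x ≠ y) : p.strict {x} {y} :=
  h.resolve_right fun heq => hne (Finset.singleton_injective heq)

instance (p : Pref O) : IsStrictTotalOrder (Finset O) p.strict where
  trichotomous X Y hXY hYX := ((p.total X Y).resolve_left hXY).resolve_right hYX
  irrefl := p.irrefl
  trans := p.trans

theorem exists_best (p : Pref O) {S : Finset O} (hS : S.Nonempty) :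
    ∃ x ∈ S, ∀ y ∈ S, p.weak {x} {y} := by
  let := linearOrderOfSTO p.strict
  obtain ⟨x, hx, hbest⟩ := S.exists_min_image (fun o => ({o} : Finset O)) hS
  exact ⟨x, hx, fun y hy => (hbest y hy).symm⟩

theorem exists_worst (p : Pref O) {S : Finset O} (hS : S.Nonempty) :
    ∃ x ∈ S, ∀ y ∈ S, p.weak {y} {x} := by
  let := linearOrderOfSTO p.strict
  obtain ⟨x, hx, hworst⟩ := S.exists_max_image (fun o => ({o} : Finset O)) hS
  exact ⟨x, hx, fun y hy => (hworst y hy).symm⟩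

theorem best_spec [Nonempty O] (p : Pref O) {S : Finset O} (hS : S.Nonempty) :
    p.best S ∈ S ∧ ∀ y ∈ S, p.weak {p.best S} {y} := by
  have h := p.exists_best hS
  rw [best, dif_pos h]
  exact h.choose_spec

end Pref

variable {p : Pref O}

/-- `p'` is obtained from `p` by moving the object `x` to the bottom of the marginal ranking, so
that a drop strategy is such a `p'` for an object `x` outside the endowment. -/
structure IsDrop (x : O) (p p' : Pref O) : Prop where
  strict_iff : ∀ u v, u ≠ x → v ≠ x → (p.strict {u} {v} ↔ p'.strict {u} {v})
  strict_bottom : ∀ y, y ≠ x → p'.strict {y} {x}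

theorem dropStrategy_iff {ωi : Finset O} {p' : Pref O} :
    DropStrategy ωi p p' ↔ ∃ x ∉ ωi, IsDrop x p p' :=
  exists_congr fun _ => and_congr_right fun _ => ⟨fun h => ⟨h.1, h.2⟩, fun h => ⟨h.1, h.2⟩⟩

theorem IsDrop.weak {x u v : O} {p' : Pref O} (h : IsDrop x p p') (hu : u ≠ x)
    (huv : p.weak {u} {v}) : p'.weak {u} {v} := by
  rcases eq_or_ne v x with rfl | hv
  · exact .inl (h.strict_bottom u hu)
  · exact huv.imp_left (h.strict_iff u v hu hv).1

variable [DecidableEq O]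

theorem lexicographic_iff :
    Lexicographic p ↔
      ∀ X Y, p.strict X Y ↔ ∃ x ∈ X \ Y, ∀ y ∈ Y \ X, p.strict {x} {y} := by
  have hbest (X Y : Finset O) :
      (∃ x ∈ X \ Y, ∀ y ∈ X \ Y ∪ Y \ X, y ≠ x → p.strict {x} {y}) ↔
        ∃ x ∈ X \ Y, ∀ y ∈ Y \ X, p.strict {x} {y} := by
    constructor
    · rintro ⟨x, hx, h⟩
      refine ⟨x, hx, fun y hy => h y (Finset.mem_union_right _ hy) ?_⟩
      rintro rfl
      exact (Finset.mem_sdiff.1 hy).2 (Finset.mem_sdiff.1 hx).1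
    · rintro ⟨x, hx, h⟩
      obtain ⟨b, hb, hbmax⟩ := p.exists_best ⟨x, hx⟩
      refine ⟨b, hb, fun y hy hne => (Finset.mem_union.1 hy).elim
        (fun hy => Pref.strict_of_weak_of_ne (hbmax y hy) hne.symm) fun hy => ?_⟩
      rcases hbmax x hx with hbx | hbx
      · exact p.trans _ _ _ hbx (h y hy)
      · exact hbx ▸ h y hy
  simp only [Lexicographic, hbest]
  refine ⟨fun h X Y => ?_, fun h X Y _ => h X Y⟩
  rcases eq_or_ne X Y with rfl | hne
  · simp [p.irrefl]
  · exact h X Y hne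

namespace Lexicographic

theorem strict_swap_iff (hp : Lexicographic p) {X : Finset O} {b o : O} (ho : o ∈ X) :
    p.strict ((insert b X).erase o) X ↔ b ∉ X ∧ p.strict {b} {o} := by
  rw [lexicographic_iff.1 hp]
  constructor
  · rintro ⟨x, hx, h⟩
    obtain ⟨rfl, hxX⟩ : x = b ∧ x ∉ X := by grind
    exact ⟨hxX, h o (by simp [ho])⟩
  · rintro ⟨hb, h⟩
    refine ⟨b, by grind, fun y hy => ?_⟩
    obtain rfl : y = o := by grind
    exact h

theorem mem_of_weak (hp : Lexicographic p) {X Y : Finset O} (hXY : p.weak X Y) {z : O}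
    (hz : z ∈ Y) (h : ∀ y ∈ X, p.strict {y} {z} → y ∈ Y) : z ∈ X := by
  rcases hXY with hXY | rfl
  · obtain ⟨x, hx, hbest⟩ := (lexicographic_iff.1 hp X Y).1 hXY
    obtain ⟨hxX, hxY⟩ := Finset.mem_sdiff.1 hx
    by_contra hzX
    exact hxY (h x hxX (hbest z (Finset.mem_sdiff.2 ⟨hz, hzX⟩)))
  · exact hz

end Lexicographic

theorem exists_lexicographic_of_isStrictTotalOrder (r : O → O → Prop) [IsStrictTotalOrder O r] :
    ∃ p : Pref O, Lexicographic p ∧ ∀ x y, p.strict {x} {y} ↔ r x y := by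
  let : LinearOrder O := linearOrderOfSTO (Function.swap r)
  let p : Pref O :=
    { strict := fun X Y => toColex Y < toColex X
      total := fun X Y => by
        simpa only [toColex_inj, eq_comm] using lt_trichotomy (toColex Y) (toColex X)
      irrefl := fun X => lt_irrefl _
      trans := fun X Y Z hXY hYZ => hYZ.trans hXY }
  have hsingle (x y : O) : p.strict {x} {y} ↔ r x y := Finset.Colex.singleton_lt_singleton
  refine ⟨p, lexicographic_iff.2 fun X Y => ?_, hsingle⟩
  simp only [hsingle, Finset.mem_sdiff, and_assoc, and_imp]
  exact Finset.Colex.toColex_lt_toColex_iff_exists_forall_lt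

theorem exists_lexicographic_isDrop (p : Pref O) (x : O) :
    ∃ p' : Pref O, Lexicographic p' ∧ IsDrop x p p' := by
  let r (u v : O) : Prop := u ≠ x ∧ (v = x ∨ p.strict {u} {v})
  have : IsStrictTotalOrder O r :=
    { trichotomous := fun u v huv hvu => by
        rcases p.total {u} {v} with h | h | h
        · grind
        · exact Finset.singleton_injective h
        · grind
      irrefl := fun u hu => hu.2.elim hu.1 (p.irrefl _)
      trans := fun u v w huv hvw =>
        ⟨huv.1, hvw.2.imp_right (p.trans _ _ _ (huv.2.resolve_left hvw.1))⟩ }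
  obtain ⟨p', hp', hr⟩ := exists_lexicographic_of_isStrictTotalOrder r
  refine ⟨p', hp', fun u v hu hv => ?_, fun y hy => (hr y x).2 ⟨hy, .inl rfl⟩⟩
  simp only [hr, r, ne_eq, hu, hv, not_false_eq_true, true_and, false_or]

theorem lexicographic_update [DecidableEq N] {P : N → Pref O} (hP : ∀ j, Lexicographic (P j))
    {i : N} {p' : Pref O} (hp' : Lexicographic p') (j : N) :
    Lexicographic (Function.update P i p' j) :=
  (Function.forall_update_iff P fun _ q => Lexicographic q).2 ⟨hp', fun j _ => hP j⟩ j

end Preferences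

namespace Allocation

theorem eq_of_mem_bundle (μ : Allocation N O) {o : O} {i j : N} (hi : o ∈ μ.bundle i)
    (hj : o ∈ μ.bundle j) : i = j :=
  by_contra fun hne => μ.disj i j hne o hi hj

theorem owner_eq_iff (μ : Allocation N O) {o : O} {i : N} : μ.owner o = i ↔ o ∈ μ.bundle i :=
  have howner : o ∈ μ.bundle (μ.owner o) := (μ.cover o).choose_spec
  ⟨fun h => h ▸ howner, μ.eq_of_mem_bundle howner⟩

end Allocation

section TopTrades

/-- The object `o` is traded as in Top Trading Cycles, where `σ o` is the object that the owner of
`o` receives in exchange for `o` and `τ o` is the round in which `o` is traded: the whole cycle is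
traded in the same round, and `σ o` is best for the owner among the objects still present. -/
structure IsTopTrade (P : N → Pref O) (own : O → N) (σ : Equiv.Perm O) (τ : O → ℕ) (o : O) :
    Prop where
  round_apply : τ (σ o) = τ o
  weak : ∀ y, τ o ≤ τ y → (P (own o)).weak {σ o} {y}

variable {P : N → Pref O} {own : O → N} {σ σ' : Equiv.Perm O} {τ τ' : O → ℕ} {o o' : O} {t : ℕ}

theorem IsTopTrade.weak_self (h : IsTopTrade P own σ τ o) : (P (own o)).weak {σ o} {o} :=
  h.weak o le_rfl

theorem IsTopTrade.round_lt_of_strict (h : IsTopTrade P own σ τ o) {y : O}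
    (hy : (P (own o)).strict {y} {σ o}) : τ y < τ o :=
  lt_of_not_ge fun hle => Pref.not_weak_of_strict hy (h.weak y hle)

theorem IsTopTrade.eq_of_round_eq (h : IsTopTrade P own σ τ o) (h' : IsTopTrade P own σ τ o')
    (hown : own o = own o') (hround : τ o = τ o') : o = o' := by
  have hle : (P (own o)).weak {σ o} {σ o'} := h.weak _ (by rw [h'.round_apply, hround])
  have hge : (P (own o)).weak {σ o'} {σ o} :=
    hown ▸ h'.weak _ (by rw [h.round_apply, hround])
  exact σ.injective (Finset.singleton_injective (Pref.weak_antisymm hle hge))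

theorem IsTopTrade.update [DecidableEq N] (h : IsTopTrade P own σ τ o) {i : N} {x : O}
    {p' : Pref O} (hdrop : IsDrop x (P i) p') (hx : own o = i → σ o ≠ x) :
    IsTopTrade (Function.update P i p') own σ τ o := by
  refine ⟨h.round_apply, fun y hy => ?_⟩
  rcases eq_or_ne (own o) i with rfl | hne
  · rw [Function.update_self]
    exact hdrop.weak (hx rfl) (h.weak y hy)
  · rw [Function.update_of_ne hne]
    exact h.weak y hy

variable [Finite O]

theorem round_symm_apply (h : ∀ y, τ y = t → IsTopTrade P own σ τ y) (ho : τ o = t) :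
    τ (σ.symm o) = t :=
  Equiv.Perm.perm_symm_on_of_perm_on_finite (p := (τ · = t))
    (fun y hy => (h y hy).round_apply.trans hy) ho

theorem IsTopTrade.apply_eq (h : ∀ y, τ y ≤ τ o → IsTopTrade P own σ τ y)
    (h' : ∀ y, IsTopTrade P own σ' τ' y) : σ' o = σ o := by
  induction hs : τ o using Nat.strong_induction_on generalizing o with | _ s ih_round
  induction hm : τ' o using Nat.strong_induction_on generalizing o with | _ m ih_round'
  -- The objects of round `s` under `τ` leaving before round `m` under `τ'` are closed under `σ`,
  -- hence under `σ.symm`; if `σ o` were one of them, then so would be `o`, although `τ' o = m`.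
  have hpresent : τ' o ≤ τ' (σ o) := by
    by_contra! hlt
    have hclosed (y : O) (hy : τ y = s ∧ τ' y < m) : τ (σ y) = s ∧ τ' (σ y) < m := by
      have hσ : σ' y = σ y := ih_round' _ hy.2 (fun z hz => h z (by omega)) hy.1 rfl
      exact ⟨(h y (by omega)).round_apply.trans hy.1, by rw [← hσ, (h' y).round_apply]; exact hy.2⟩
    have hback := Equiv.Perm.perm_symm_on_of_perm_on_finite hclosed
      ⟨(h o le_rfl).round_apply.trans hs, hm ▸ hlt⟩
    rw [Equiv.symm_apply_apply, hm] at hback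
    exact hback.2.false
  by_contra hne
  have hbetter : (P (own o)).strict {σ' o} {σ o} :=
    Pref.strict_of_weak_of_ne ((h' o).weak _ hpresent) hne
  have hearlier : τ (σ' o) < τ o := (h o le_rfl).round_lt_of_strict hbetter
  set z := σ.symm (σ' o) with hz
  have hτz : τ z = τ (σ' o) := round_symm_apply (fun y hy => h y (hy.le.trans hearlier.le)) rfl
  have hσz : σ' z = σ z := ih_round _ (by omega) (fun y hy => h y (by omega)) rfl
  have hzo : z = o := σ'.injective (by rw [hσz, hz, Equiv.apply_symm_apply])
  rw [hzo] at hτz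
  omega

end TopTrades

section TTC

/-- Top trades that clear the market `S`; the objects outside `S` have left before, which is encoded
by round `0`. -/
structure IsClearing (P : N → Pref O) (own : O → N) (S : Finset O) (σ : Equiv.Perm O)
    (τ : O → ℕ) : Prop where
  apply_eq_self : ∀ o ∉ S, σ o = o
  round_eq_zero : ∀ o ∉ S, τ o = 0
  round_pos : ∀ o ∈ S, 0 < τ o
  isTopTrade : ∀ o ∈ S, IsTopTrade P own σ τ o

variable {P : N → Pref O} {own : O → N} {S : Finset O}

theorem isClearing_empty : IsClearing P own ∅ 1 0 where
  apply_eq_self _ _ := rfl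
  round_eq_zero _ _ := rfl
  round_pos o ho := absurd ho (Finset.notMem_empty o)
  isTopTrade o ho := absurd ho (Finset.notMem_empty o)

variable [DecidableEq O]

theorem IsClearing.exists_of_bijOn {C : Finset O} {g : O → O} {σ₁ : Equiv.Perm O} {τ₁ : O → ℕ}
    (h : IsClearing P own (S \ C) σ₁ τ₁) (hCS : C ⊆ S) (hg : Set.BijOn g C C)
    (hbest : ∀ o ∈ C, ∀ y ∈ S, (P (own o)).weak {g o} {y}) :
    ∃ σ τ, IsClearing P own S σ τ ∧ (∀ o ∈ C, σ o = g o) ∧ ∀ o ∉ C, σ o = σ₁ o := by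
  obtain ⟨ρ, hρC, hρ⟩ := exists_perm_of_bijOn hg
  have hleft {o : O} (ho : o ∈ C) : σ₁ o = o ∧ τ₁ o = 0 :=
    ⟨h.apply_eq_self o (by simp [ho]), h.round_eq_zero o (by simp [ho])⟩
  have hC (o : O) (ho : o ∈ C) : (ρ * σ₁) o = g o := by
    rw [Equiv.Perm.mul_apply, (hleft ho).1, hρC o ho]
  have hnotC (o : O) (ho : o ∉ C) : (ρ * σ₁) o = σ₁ o :=
    hρ _ fun hmem => ho (by rwa [Finset.mem_coe, σ₁.injective (hleft hmem).1] at hmem)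
  let τ (o : O) : ℕ := if o ∈ S then τ₁ o + 1 else 0
  have hτ {o : O} (ho : o ∈ S) : τ o = τ₁ o + 1 := if_pos ho
  refine ⟨ρ * σ₁, τ, ⟨fun o ho => ?_, fun o ho => if_neg ho, fun o ho => by simp [hτ ho],
    fun o ho => ?_⟩, hC, hnotC⟩
  · rw [hnotC o fun hoC => ho (hCS hoC), h.apply_eq_self o (by simp [ho])]
  have hpresent {y : O} (hy : τ o ≤ τ y) : y ∈ S := by
    by_contra hyS
    simp [τ, ho, hyS] at hy
  by_cases hoC : o ∈ C
  · have hgC : g o ∈ C := hg.mapsTo hoC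
    refine ⟨?_, fun y hy => hC o hoC ▸ hbest o hoC y (hpresent hy)⟩
    rw [hC o hoC, hτ (hCS hgC), hτ ho, (hleft hgC).2, (hleft hoC).2]
  · have hmem : o ∈ S \ C := Finset.mem_sdiff.2 ⟨ho, hoC⟩
    have htrade := h.isTopTrade o hmem
    have hσS : σ₁ o ∈ S := by
      by_contra hσS
      have hzero := h.round_eq_zero (σ₁ o) (by simp [hσS])
      exact (h.round_pos o hmem).ne' (htrade.round_apply ▸ hzero)
    refine ⟨?_, fun y hy => ?_⟩
    · rw [hnotC o hoC, hτ hσS, hτ ho, htrade.round_apply]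
    · rw [hnotC o hoC]
      rw [hτ (hpresent hy), hτ ho] at hy
      exact htrade.weak y (Nat.le_of_succ_le_succ hy)

variable [Nonempty O]

theorem exists_isClearing_TTCaux (fuel : ℕ) (hS : S.card ≤ fuel) :
    ∃ σ τ, IsClearing P own S σ τ ∧
      ∀ i, TTCaux P own fuel S i = (S.filter (own · = i)).image σ := by
  induction fuel generalizing S with
  | zero =>
    obtain rfl : S = ∅ := Finset.card_eq_zero.1 (Nat.le_zero.1 hS)
    exact ⟨1, 0, isClearing_empty, fun i => rfl⟩
  | succ fuel ih =>
    rcases S.eq_empty_or_nonempty with rfl | hne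
    · exact ⟨1, 0, isClearing_empty, fun i => by simp [TTCaux]⟩
    set g : O → O := fun o => (P (own o)).best S
    have hbest (o : O) := (P (own o)).best_spec hne
    set C : Finset O := S.filter (· ∈ Function.periodicPts g)
    have hCS : C ⊆ S := Finset.filter_subset _ _
    have hmaps : Set.MapsTo g S S := fun o _ => (hbest o).1
    have hbij : Set.BijOn g C C := by
      rw [Finset.coe_filter]
      exact bijOn_inter_periodicPts hmaps
    obtain ⟨o, hoS, ho⟩ := exists_mem_periodicPts_of_mapsTo S.finite_toSet hne hmaps
    have hcard : (S \ C).card ≤ fuel := by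
      have hlt := Finset.card_lt_card
        (Finset.sdiff_ssubset hCS ⟨o, Finset.mem_filter.2 ⟨hoS, ho⟩⟩)
      omega
    obtain ⟨σ₁, τ₁, hrest, hTTC⟩ := ih hcard
    obtain ⟨σ, τ, hclear, hσC, hσ⟩ := hrest.exists_of_bijOn hCS hbij
      fun o _ => (hbest o).2
    refine ⟨σ, τ, hclear, fun i => ?_⟩
    calc TTCaux P own (fuel + 1) S i
        = (C.filter (own · = i)).image g ∪ TTCaux P own fuel (S \ C) i := if_pos hne
      _ = (C.filter (own · = i)).image σ ∪ ((S \ C).filter (own · = i)).image σ := by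
        rw [hTTC]
        congr 1 <;> refine Finset.image_congr fun o ho => ?_
        · exact (hσC o (Finset.mem_filter.1 ho).1).symm
        · exact (hσ o (Finset.mem_sdiff.1 (Finset.mem_filter.1 ho).1).2).symm
      _ = (S.filter (own · = i)).image σ := by
        rw [← Finset.image_union, ← Finset.filter_union, Finset.union_sdiff_of_subset hCS]

variable [Fintype O] {ω : Allocation N O} {i : N}

theorem exists_isTopTrade_TTC (P : N → Pref O) (ω : Allocation N O) :
    ∃ σ τ, (∀ o, IsTopTrade P ω.owner σ τ o) ∧
      ∀ i, TTC P ω i = (ω.bundle i).map σ.toEmbedding := by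
  obtain ⟨σ, τ, hclear, hTTC⟩ := exists_isClearing_TTCaux (P := P) (own := ω.owner)
    (S := Finset.univ) (Fintype.card O + 1) (Nat.le_succ _)
  refine ⟨σ, τ, fun o => hclear.isTopTrade o (Finset.mem_univ o), fun i => ?_⟩
  have hbundle : Finset.univ.filter (ω.owner · = i) = ω.bundle i := by
    ext o
    simp [ω.owner_eq_iff]
  rw [TTC, hTTC, hbundle, Finset.map_eq_image]
  rfl

theorem card_TTC (P : N → Pref O) (ω : Allocation N O) (i : N) :
    (TTC P ω i).card = (ω.bundle i).card := by
  obtain ⟨σ, -, -, hTTC⟩ := exists_isTopTrade_TTC P ω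
  rw [hTTC, Finset.card_map]

theorem IGEat_TTC (hP : ∀ j, Lexicographic (P j)) : IGEat P (TTC P ω) := by
  obtain ⟨σ, τ, htop, hTTC⟩ := exists_isTopTrade_TTC P ω
  rintro ⟨k, obj, ag, -, -, hmem, hgain⟩
  have hdecr (ℓ : Fin (k + 1)) : τ (obj (ℓ + 1)) < τ (obj ℓ) := by
    obtain ⟨-, hbetter⟩ := ((hP _).strict_swap_iff (hmem ℓ)).1 (hgain ℓ)
    obtain ⟨e, he, heq⟩ := Finset.mem_map.1 (hTTC _ ▸ hmem ℓ)
    rw [← heq, ← ω.owner_eq_iff.2 he] at hbetter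
    exact ((htop e).round_lt_of_strict hbetter).trans_eq (heq ▸ (htop e).round_apply.symm)
  obtain ⟨ℓ, hℓ⟩ := Finite.exists_min fun ℓ => τ (obj ℓ)
  exact (hdecr ℓ).not_ge (hℓ (ℓ + 1))

theorem exists_weak_of_mem_TTC {z : O} (hz : z ∈ TTC P ω i) :
    ∃ e ∈ ω.bundle i, (P i).weak {z} {e} := by
  obtain ⟨σ, τ, htop, hTTC⟩ := exists_isTopTrade_TTC P ω
  obtain ⟨e, he, rfl⟩ := Finset.mem_map.1 (hTTC i ▸ hz)
  exact ⟨e, he, ω.owner_eq_iff.2 he ▸ (htop e).weak_self⟩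

variable [DecidableEq N] {p' : Pref O} {x : O}

theorem TTC_update_of_notMem (hdrop : IsDrop x (P i) p') (hx : x ∉ TTC P ω i) :
    TTC (Function.update P i p') ω = TTC P ω := by
  obtain ⟨σ, τ, htop, hTTC⟩ := exists_isTopTrade_TTC P ω
  obtain ⟨σ', τ', htop', hTTC'⟩ := exists_isTopTrade_TTC (Function.update P i p') ω
  have hσ : σ' = σ := Equiv.ext fun o =>
    IsTopTrade.apply_eq (fun y _ => (htop y).update hdrop fun hy hyx =>
      hx (hTTC i ▸ Finset.mem_map.2 ⟨y, ω.owner_eq_iff.1 hy, hyx⟩)) htop'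
  funext j
  rw [hTTC, hTTC', hσ]

theorem notMem_TTC_update (hdrop : IsDrop x (P i) p') (hx : x ∉ ω.bundle i) :
    x ∉ TTC (Function.update P i p') ω i := by
  intro hmem
  obtain ⟨e, he, hweak⟩ := exists_weak_of_mem_TTC hmem
  rw [Function.update_self] at hweak
  exact Pref.not_weak_of_strict (hdrop.strict_bottom e fun h => hx (h ▸ he)) hweak

theorem weak_of_mem_TTC_update_of_notMem_TTC (hdrop : IsDrop x (P i) p') (hx : x ∈ TTC P ω i)
    {y : O} (hy' : y ∈ TTC (Function.update P i p') ω i) (hy : y ∉ TTC P ω i) :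
    (P i).weak {x} {y} := by
  obtain ⟨σ, τ, htop, hTTC⟩ := exists_isTopTrade_TTC P ω
  obtain ⟨σ', τ', htop', hTTC'⟩ := exists_isTopTrade_TTC (Function.update P i p') ω
  obtain ⟨e, he, rfl⟩ := Finset.mem_map.1 (hTTC i ▸ hx)
  obtain ⟨u, hu, rfl⟩ := Finset.mem_map.1 (hTTC' i ▸ hy')
  by_contra hworse
  rw [← ω.owner_eq_iff.2 he] at hworse
  set z := σ.symm (σ' u) with hz
  have hearlier : τ z < τ e := by
    rw [round_symm_apply (fun y _ => htop y) rfl]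
    exact (htop e).round_lt_of_strict (Pref.not_weak_iff.1 hworse)
  have hσz : σ' z = σ z := IsTopTrade.apply_eq (fun w hw => (htop w).update hdrop fun _ hwe =>
    (hw.trans_lt hearlier).ne (congrArg τ (σ.injective hwe))) htop'
  have hzu : z = u := σ'.injective (by rw [hσz, hz, Equiv.apply_symm_apply])
  exact hy (hTTC i ▸ Finset.mem_map.2 ⟨u, hu, hzu ▸ hσz.symm⟩)

theorem TTC_weak_TTC_update (hP : Lexicographic (P i))
    (hdrop : DropStrategy (ω.bundle i) (P i) p') :
    (P i).weak (TTC P ω i) (TTC (Function.update P i p') ω i) := by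
  obtain ⟨x, hxω, hdrop⟩ := dropStrategy_iff.1 hdrop
  by_cases hx : x ∈ TTC P ω i
  · refine .inl ((lexicographic_iff.1 hP _ _).2
      ⟨x, Finset.mem_sdiff.2 ⟨hx, notMem_TTC_update hdrop hxω⟩, fun y hy => ?_⟩)
    obtain ⟨hy', hy⟩ := Finset.mem_sdiff.1 hy
    exact Pref.strict_of_weak_of_ne (weak_of_mem_TTC_update_of_notMem_TTC hdrop hx hy' hy)
      fun h => hy (h ▸ hx)
  · exact .inr (by rw [TTC_update_of_notMem hdrop hx])

end TTC

section Acceptable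

variable [Fintype O] {p p' : Pref O} {ωi : Finset O} {x : O}

/-- The objects outside the endowment `ωi` that are better than the worst object of `ωi`: apart from
`ωi` itself, all that the worst-endowment lower bound permits. -/
noncomputable def acceptable (ωi : Finset O) (p : Pref O) : Finset O :=
  Finset.univ.filter fun o => o ∉ ωi ∧ ∃ w ∈ ωi, p.strict {o} {w}

theorem mem_acceptable {o : O} :
    o ∈ acceptable ωi p ↔ o ∉ ωi ∧ ∃ w ∈ ωi, p.strict {o} {w} :=
  Finset.mem_filter_univ o

theorem acceptable_ssubset_of_isDrop (hdrop : IsDrop x p p') (hx : x ∈ acceptable ωi p) :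
    acceptable ωi p' ⊂ acceptable ωi p := by
  have hne {w : O} (hw : w ∈ ωi) : w ≠ x := fun h => (mem_acceptable.1 hx).1 (h ▸ hw)
  have hx' : x ∉ acceptable ωi p' := by
    intro hmem
    obtain ⟨-, w, hw, hxw⟩ := mem_acceptable.1 hmem
    exact Pref.strict_asymm hxw (hdrop.strict_bottom w (hne hw))
  refine (Finset.ssubset_iff_of_subset fun o ho => ?_).2 ⟨x, hx, hx'⟩
  have hox : o ≠ x := fun h => hx' (h ▸ ho)
  obtain ⟨hoω, w, hw, how⟩ := mem_acceptable.1 ho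
  exact mem_acceptable.2 ⟨hoω, w, hw, (hdrop.strict_iff o w hox (hne hw)).2 how⟩

/-- The total number of acceptable objects, which decreases when an agent drops one of hers. -/
noncomputable def acceptableCount [Fintype N] (ω : Allocation N O) (P : N → Pref O) : ℕ :=
  ∑ i, (acceptable (ω.bundle i) (P i)).card

theorem acceptableCount_update_lt [Fintype N] [DecidableEq N] {ω : Allocation N O}
    {P : N → Pref O} {i : N} (hdrop : IsDrop x (P i) p') (hx : x ∈ acceptable (ω.bundle i) (P i)) :
    acceptableCount ω (Function.update P i p') < acceptableCount ω P := by
  have hlt := Finset.card_lt_card (acceptable_ssubset_of_isDrop hdrop hx)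
  refine Finset.sum_lt_sum (fun j _ => ?_) ⟨i, Finset.mem_univ i, by rwa [Function.update_self]⟩
  rcases eq_or_ne j i with rfl | hj
  · rw [Function.update_self]
    exact hlt.le
  · rw [Function.update_of_ne hj]

end Acceptable

section Uniqueness

variable {ω μ ν : Allocation N O} {P : N → Pref O} {σ : Equiv.Perm O} {τ : O → ℕ} {t : ℕ} {o : O}
  {i : N}

theorem owner_symm_of_mem_bundle [Finite O] {z : O}
    (htop : ∀ y, τ y = τ z → IsTopTrade P ω.owner σ τ y)
    (hexec : ∀ y, τ y = τ z → σ y ∈ μ.bundle (ω.owner y)) (hz : z ∈ μ.bundle i) :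
    ω.owner (σ.symm z) = i := by
  have hmem := hexec (σ.symm z) (round_symm_apply htop rfl)
  rw [Equiv.apply_symm_apply] at hmem
  exact μ.eq_of_mem_bundle hmem hz

theorem mem_bundle_of_forall_mem_endowment [Finite O]
    (htop : ∀ y, τ y < t → IsTopTrade P ω.owner σ τ y)
    (hexec : ∀ y, τ y < t → σ y ∈ μ.bundle (ω.owner y))
    (hcard : (μ.bundle i).card = (ω.bundle i).card)
    (hlate : ∀ z ∈ μ.bundle i, t ≤ τ z → z ∈ ω.bundle i) (ho : o ∈ ω.bundle i) (hot : t ≤ τ o) :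
    o ∈ μ.bundle i := by
  set R : Finset O := (ω.bundle i).image fun y => if τ y < t then σ y else y
  have hsub : μ.bundle i ⊆ R := by
    intro z hz
    rcases lt_or_ge (τ z) t with hzt | hzt
    · have howner := owner_symm_of_mem_bundle (fun y hy => htop y (hy.trans_lt hzt))
        (fun y hy => hexec y (hy.trans_lt hzt)) hz
      have hround : τ (σ.symm z) < t :=
        (round_symm_apply (fun y hy => htop y (hy.trans_lt hzt)) rfl).trans_lt hzt
      exact Finset.mem_image.2
        ⟨σ.symm z, ω.owner_eq_iff.1 howner, by rw [if_pos hround, Equiv.apply_symm_apply]⟩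
    · exact Finset.mem_image.2 ⟨z, hlate z hz hzt, if_neg hzt.not_gt⟩
  have heq : μ.bundle i = R :=
    Finset.eq_of_subset_of_card_le hsub (Finset.card_image_le.trans hcard.ge)
  rw [heq]
  exact Finset.mem_image.2 ⟨o, ho, if_neg hot.not_gt⟩

theorem apply_mem_bundle_of_weak [Finite O] [DecidableEq O] (hP : Lexicographic (P (ω.owner o)))
    (hweak : (P (ω.owner o)).weak (μ.bundle (ω.owner o)) (ν.bundle (ω.owner o)))
    (htop : ∀ y, τ y ≤ τ o → IsTopTrade P ω.owner σ τ y)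
    (hμ : ∀ y, τ y < τ o → σ y ∈ μ.bundle (ω.owner y))
    (hν : ∀ y, τ y ≤ τ o → σ y ∈ ν.bundle (ω.owner y)) : σ o ∈ μ.bundle (ω.owner o) := by
  refine hP.mem_of_weak hweak (hν o le_rfl) fun z hz hbetter => ?_
  have hearlier : τ z < τ o := (htop o le_rfl).round_lt_of_strict hbetter
  have htop' (y : O) (hy : τ y = τ z) := htop y (hy.trans_lt hearlier).le
  have howner := owner_symm_of_mem_bundle htop' (fun y hy => hμ y (hy.trans_lt hearlier)) hz
  have hmem := hν (σ.symm z) ((round_symm_apply htop' rfl).trans_lt hearlier).le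
  rwa [howner, Equiv.apply_symm_apply] at hmem

theorem apply_mem_bundle_of_IGEat [Finite O] [DecidableEq O] (hP : ∀ j, Lexicographic (P j))
    (hI : IGEat P μ.bundle) (htop : ∀ y, τ y = t → IsTopTrade P ω.owner σ τ y)
    (hkeep : ∀ y, τ y = t → σ y ∉ μ.bundle (ω.owner y) → y ∈ μ.bundle (ω.owner y))
    (ho : τ o = t) : σ o ∈ μ.bundle (ω.owner o) := by
  set bad : Set O := {y | τ y = t ∧ σ y ∉ μ.bundle (ω.owner y)}
  have hsymm (y : O) (hy : y ∈ bad) : σ.symm y ∈ bad := by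
    obtain ⟨hyt, hyμ⟩ := hy
    have hround : τ (σ.symm y) = t := round_symm_apply htop hyt
    refine ⟨hround, fun hmem => hyμ ?_⟩
    rw [Equiv.apply_symm_apply] at hmem
    have howner := μ.eq_of_mem_bundle hmem (hkeep y hyt hyμ)
    have hfix := (htop _ hround).eq_of_round_eq (htop y hyt) howner (hround.trans hyt.symm)
    rwa [← (Equiv.symm_apply_eq σ).1 hfix, ← howner]
  have hmaps : Set.MapsTo σ bad bad := fun y hy =>
    Equiv.Perm.perm_symm_on_of_perm_on_finite (f := σ.symm) (p := (· ∈ bad)) hsymm hy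
  by_contra hmem
  obtain ⟨k, c, hinj, hc, hnext⟩ :=
    exists_injective_cycle_of_mapsTo bad.toFinite ⟨o, ho, hmem⟩ hmaps
  refine hI ⟨k, c, fun ℓ => ω.owner (c ℓ), hinj, fun a b hab => hinj ?_,
    fun ℓ => hkeep _ (hc ℓ).1 (hc ℓ).2, fun ℓ => ?_⟩
  · exact (htop _ (hc a).1).eq_of_round_eq (htop _ (hc b).1) hab ((hc a).1.trans (hc b).1.symm)
  · have hcμ := hkeep _ (hc ℓ).1 (hc ℓ).2
    rw [(hP _).strict_swap_iff hcμ, hnext]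
    exact ⟨(hc ℓ).2, Pref.strict_of_weak_of_ne (htop _ (hc ℓ).1).weak_self
      fun heq => (hc ℓ).2 (heq.symm ▸ hcμ)⟩

variable [DecidableEq O] {φ : (N → Pref O) → Allocation N O}

theorem mem_endowment_or_acceptable [Fintype O] (hW : RWELB Lexicographic ω φ)
    (hP : ∀ j, Lexicographic (P j)) (ho : o ∈ (φ P).bundle i) :
    o ∈ ω.bundle i ∨ o ∈ acceptable (ω.bundle i) (P i) := by
  obtain ⟨w, hw, hworst⟩ := (P i).exists_worst (ω.nonempty i)
  refine or_iff_not_imp_left.2 fun hoω => mem_acceptable.2 ⟨hoω, w, hw, ?_⟩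
  exact Pref.strict_of_weak_of_ne (hW P hP i o ho w hw hworst) fun h => hoω (h ▸ hw)

theorem mem_bundle_owner_of_forall_acceptable [Fintype O] (hB : RBAL Lexicographic ω φ)
    (hW : RWELB Lexicographic ω φ) (hP : ∀ j, Lexicographic (P j))
    (htop : ∀ y, τ y ≤ τ o → IsTopTrade P ω.owner σ τ y)
    (hexec : ∀ y, τ y < τ o → σ y ∈ (φ P).bundle (ω.owner y))
    (ho : σ o ∉ (φ P).bundle (ω.owner o))
    (hacc : ∀ x ∈ acceptable (ω.bundle (ω.owner o)) (P (ω.owner o)),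
      ∃ y, τ y ≤ τ o ∧ ω.owner y = ω.owner o ∧ σ y = x) :
    o ∈ (φ P).bundle (ω.owner o) := by
  refine mem_bundle_of_forall_mem_endowment (fun y hy => htop y hy.le) hexec (hB P hP _)
    (fun z hz hzt => ?_) (ω.owner_eq_iff.1 rfl) le_rfl
  refine (mem_endowment_or_acceptable hW hP hz).resolve_right fun hz' => ?_
  obtain ⟨y, hy, howner, rfl⟩ := hacc z hz'
  have hround : τ y = τ o := hy.antisymm (hzt.trans_eq (htop y hy).round_apply)
  obtain rfl := (htop y hy).eq_of_round_eq (htop o le_rfl) howner hround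
  exact ho hz

variable [DecidableEq N]

theorem exists_apply_eq_of_mem_acceptable [Fintype N] [Fintype O]
    (hD : RDSP Lexicographic ω φ)
    (hP : ∀ j, Lexicographic (P j)) (htop : ∀ y, τ y ≤ τ o → IsTopTrade P ω.owner σ τ y)
    (hexec : ∀ y, τ y < τ o → σ y ∈ (φ P).bundle (ω.owner y))
    (hind : ∀ Q, (∀ j, Lexicographic (Q j)) → acceptableCount ω Q < acceptableCount ω P →
      (∀ y, τ y ≤ τ o → IsTopTrade Q ω.owner σ τ y) →
      ∀ y, τ y ≤ τ o → σ y ∈ (φ Q).bundle (ω.owner y))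
    (ho : σ o ∉ (φ P).bundle (ω.owner o)) {x : O}
    (hx : x ∈ acceptable (ω.bundle (ω.owner o)) (P (ω.owner o))) :
    ∃ y, τ y ≤ τ o ∧ ω.owner y = ω.owner o ∧ σ y = x := by
  by_contra! hno
  obtain ⟨p', hp', hdrop⟩ := exists_lexicographic_isDrop (P (ω.owner o)) x
  have hP' := lexicographic_update hP (i := ω.owner o) hp'
  have hexec' := hind _ hP' (acceptableCount_update_lt hdrop hx)
    fun y hy => (htop y hy).update hdrop (hno y hy)
  have hweak := hD P hP _ p' hp' (dropStrategy_iff.2 ⟨x, (mem_acceptable.1 hx).1, hdrop⟩)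
  exact ho (apply_mem_bundle_of_weak (hP _) hweak htop hexec hexec')

theorem apply_mem_bundle_owner [Finite N] [Finite O] (hB : RBAL Lexicographic ω φ)
    (hI : RIGE Lexicographic φ) (hW : RWELB Lexicographic ω φ) (hD : RDSP Lexicographic ω φ)
    (hP : ∀ j, Lexicographic (P j)) (htop : ∀ y, τ y ≤ t → IsTopTrade P ω.owner σ τ y)
    (ho : τ o ≤ t) : σ o ∈ (φ P).bundle (ω.owner o) := by
  cases nonempty_fintype N
  cases nonempty_fintype O
  induction t using Nat.strong_induction_on generalizing P o with | _ t ih_round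
  induction hn : acceptableCount ω P using Nat.strong_induction_on generalizing P o with
  | _ n ih_count
  have hexec (y : O) (hy : τ y < t) : σ y ∈ (φ P).bundle (ω.owner y) :=
    ih_round _ hy hP (fun z hz => htop z (hz.trans hy.le)) le_rfl
  rcases ho.lt_or_eq with hlt | heq
  · exact hexec o hlt
  refine apply_mem_bundle_of_IGEat hP (hI P hP) (fun y hy => htop y hy.le)
    (fun y hy hbad => ?_) heq
  subst hy
  refine mem_bundle_owner_of_forall_acceptable hB hW hP htop hexec hbad fun x hx =>
    exists_apply_eq_of_mem_acceptable hD hP htop hexec (fun Q hQ hlt htopQ z hz => ?_) hbad hx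
  exact ih_count _ (hlt.trans_eq hn) hQ htopQ hz rfl

end Uniqueness

/-- On the lexicographic domain, a rule satisfies BAL, IGE, WELB and DSP
iff it equals the generalized Top Trading Cycles rule. -/
theorem stmt3 {N O : Type} [Fintype N] [Fintype O] [DecidableEq N] [DecidableEq O] [Nonempty O]
    (hN : 2 ≤ Fintype.card N) (hNO : Fintype.card N ≤ Fintype.card O)
    (ω : Allocation N O) (φ : (N → Pref O) → Allocation N O) :
    (RBAL Lexicographic ω φ ∧ RIGE Lexicographic φ ∧ RWELB Lexicographic ω φ ∧
        RDSP Lexicographic ω φ) ↔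
      ∀ P : N → Pref O, (∀ i, Lexicographic (P i)) → ∀ i, (φ P).bundle i = TTC P ω i := by
  constructor
  · rintro ⟨hB, hI, hW, hD⟩ P hP i
    obtain ⟨σ, τ, htop, hTTC⟩ := exists_isTopTrade_TTC P ω
    refine (Finset.eq_of_subset_of_card_le (fun z hz => ?_) ?_).symm
    · obtain ⟨o, ho, rfl⟩ := Finset.mem_map.1 (hTTC i ▸ hz)
      exact ω.owner_eq_iff.2 ho ▸
        apply_mem_bundle_owner hB hI hW hD hP (fun y _ => htop y) le_rfl
    · rw [hB P hP i, card_TTC]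
  · intro hφ
    refine ⟨fun P hP i => ?_, fun P hP => ?_, fun P hP i o ho w _ hw => ?_,
      fun P hP i p' hp' hdrop => ?_⟩
    · rw [hφ P hP, card_TTC]
    · exact funext (hφ P hP) ▸ IGEat_TTC hP
    · obtain ⟨e, he, hoe⟩ := exists_weak_of_mem_TTC (hφ P hP i ▸ ho)
      exact Pref.weak_trans hoe (hw e he)
    · rw [hφ P hP, hφ _ (lexicographic_update hP hp')]
      exact TTC_weak_TTC_update (hP i) hdrop

end Realloc
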